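/- Let a > 0, b > 0, c > 0 be real numbers satisfying c > b − a + 1/2, b ≥ a − 1/2, c > 3a + 1/2 − b, b > a, and c ≥ a + a/(2(b−a)). Put ν = (b + c − a − 3/2)/2 and for each positive integer n define C(n,ν) = Σ_{k=0}^{n} (−1)^k C(n,k) (n+2ν)_k (ν+1)_k (a)_k / ((ν+1/2)_k (b)_k (c)_k). Then C(1,ν) ≥ 0 and C(n,ν) > 0 for every integer n ≥ 2. -/

import Mathlib

/-- Pochhammer symbol `(a)_k = a (a+1) ⋯ (a+k-1)` for a real number `a`. -/
noncomputable def poch (a : ℝ) (k : ℕ) : ℝ := ∏ i ∈ Finset.range k, (a + i)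

/-- The terminating series `C(n,ν) = ₄F₃[−n, n+2ν, ν+1, a; ν+1/2, b, c]` from
Gasper's sums-of-squares expansion. -/
noncomputable def gasperC (a b c ν : ℝ) (n : ℕ) : ℝ :=
  ∑ k ∈ Finset.range (n + 1),
    (-1 : ℝ) ^ k * (n.choose k) * poch ((n : ℝ) + 2 * ν) k * poch (ν + 1) k * poch a k /
      (poch (ν + 1 / 2) k * poch b k * poch c k)

/-!
Put `β = b - a`, `δ = c - (ν + 1)`, `ε = ν + 1/2 - a`. Whipple's transformation of balanced
terminating `₄F₃` series, obtained by applying the Pfaff–Saalschütz theorem twice, rewrites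
`(b)_n (ν + 1/2)_n C(n,ν)` as a sum over `j + i = n` of the terms
`C(n,j) (a)_j (δ)_j / (c)_j · (β - 1/2 + i)_j (β)_i (ε)_i`, of which only the one with `i = 0` can
be negative. With `m = n - 1` and `S m = (a+1)_m (δ+1)_m / (c+1)_m`, the hypothesis
`a + a / (2 (b - a)) ≤ c` says precisely that this term is at least `-β ε (β + 1/2)_m S m`.

The other terms outweigh it: since `a, δ ≤ c`, the function `x ↦ (a+x)(δ+x)/(c+x)` increases by at
most `x` on `[0, x]`, which gives `S (m+1) ≤ (a)_{m+1} (δ)_{m+1} / (c)_{m+1} + (m+1) S m`, and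
iterating, `S m ≤ ∑ C(m,j) i! (a)_j (δ)_j / (c)_j` over `j + i = m`. This is to be compared termwise
with the terms `i ≥ 1` of the original sum, which carry the larger coefficients `C(m+1,j)`.
-/

open Finset hiding antidiagonal mem_antidiagonal
open Finset.HasAntidiagonal (antidiagonal mem_antidiagonal)

lemma poch_eq_ascPochhammer_eval (a : ℝ) (k : ℕ) : poch a k = (ascPochhammer ℝ k).eval a := by
  induction k with
  | zero => simp [poch]
  | succ k ih => rw [ascPochhammer_succ_eval, ← ih, poch, prod_range_succ, poch]

lemma poch_eq_descPochhammer_smeval (a : ℝ) (k : ℕ) :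
    poch a k = (-1) ^ k * (descPochhammer ℤ k).smeval (-a) := by
  rw [poch_eq_ascPochhammer_eval, ← Polynomial.ascPochhammer_smeval_eq_eval]
  have := Polynomial.ascPochhammer_smeval_neg_eq_descPochhammer (-a) k
  simpa [Units.smul_def] using this

@[simp]
lemma poch_zero (a : ℝ) : poch a 0 = 1 := prod_range_zero _

lemma poch_succ (a : ℝ) (k : ℕ) : poch a (k + 1) = poch a k * (a + k) :=
  prod_range_succ _ k

lemma poch_add (a : ℝ) (j k : ℕ) : poch a (j + k) = poch a j * poch (a + j) k := by
  simp only [poch, prod_range_add, Nat.cast_add, add_assoc]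

@[simp]
lemma poch_one (a : ℝ) : poch a 1 = a := by simp [poch]

lemma poch_succ_left (a : ℝ) (k : ℕ) : poch a (k + 1) = a * poch (a + 1) k := by
  rw [add_comm k, poch_add, poch_one, Nat.cast_one]

lemma poch_pos {a : ℝ} (ha : 0 < a) (k : ℕ) : 0 < poch a k :=
  prod_pos fun _ _ => by positivity

lemma poch_nonneg {a : ℝ} (ha : 0 ≤ a) (k : ℕ) : 0 ≤ poch a k :=
  prod_nonneg fun _ _ => by positivity

lemma poch_le_poch {a b : ℝ} (ha : 0 ≤ a) (hab : a ≤ b) (k : ℕ) : poch a k ≤ poch b k :=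
  prod_le_prod (fun _ _ => by positivity) fun _ _ => by gcongr

lemma poch_one_left (k : ℕ) : poch 1 k = k.factorial := by
  rw [poch_eq_ascPochhammer_eval, ascPochhammer_eval_one]

lemma poch_reflect (a : ℝ) (k : ℕ) : poch (1 - a - k) k = (-1) ^ k * poch a k := by
  rw [poch, poch, ← prod_range_reflect, ← card_range k, ← prod_const, card_range,
    ← prod_mul_distrib]
  refine prod_congr rfl fun i hi => ?_
  have hik : i + 1 ≤ k := mem_range.mp hi
  rw [Nat.sub_sub, Nat.cast_sub (by omega)]
  push_cast
  ring

lemma poch_ne_zero_of_le {a : ℝ} {k n : ℕ} (hkn : k ≤ n) (ha : poch a n ≠ 0) : poch a k ≠ 0 := by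
  obtain ⟨l, rfl⟩ := Nat.exists_eq_add_of_le hkn
  exact left_ne_zero_of_mul (poch_add a k l ▸ ha)

lemma poch_add_left (x y : ℝ) (n : ℕ) :
    poch (x + y) n = ∑ p ∈ antidiagonal n, n.choose p.1 * (poch x p.1 * poch y p.2) := by
  simp only [poch_eq_descPochhammer_smeval, neg_add,
    Ring.descPochhammer_smeval_add n (Commute.all (-x) (-y)), mul_sum]
  refine sum_congr rfl fun p hp => ?_
  rw [← mem_antidiagonal.mp hp, pow_add]
  ring

lemma sum_choose_mul_sum_choose_assoc {R : Type*} [CommSemiring R] (f : ℕ → ℕ → ℕ → R) (n : ℕ) :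
    ∑ p ∈ antidiagonal n, (n.choose p.1 : R) *
        ∑ q ∈ antidiagonal p.1, (p.1.choose q.1 : R) * f q.1 q.2 p.2 =
      ∑ p ∈ antidiagonal n, (n.choose p.1 : R) *
        ∑ q ∈ antidiagonal p.2, (p.2.choose q.1 : R) * f p.1 q.1 q.2 := by
  simp only [mul_sum, sum_sigma', ← mul_assoc, ← Nat.cast_mul]
  refine sum_nbij' (fun ⟨⟨_, l⟩, ⟨i, j⟩⟩ => ⟨(i, j + l), (j, l)⟩)
    (fun ⟨⟨i, _⟩, ⟨j, l⟩⟩ => ⟨(i + j, l), (i, j)⟩) ?_ ?_ ?_ ?_ ?_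
  · rintro ⟨⟨k, l⟩, ⟨i, j⟩⟩ h
    obtain ⟨rfl, rfl⟩ : k + l = n ∧ i + j = k := by simpa using h
    simp [add_assoc]
  · rintro ⟨⟨i, m⟩, ⟨j, l⟩⟩ h
    obtain ⟨rfl, rfl⟩ : i + m = n ∧ j + l = m := by simpa using h
    simp [add_assoc]
  · aesop
  · aesop
  · rintro ⟨⟨k, l⟩, ⟨i, j⟩⟩ h
    obtain ⟨rfl, rfl⟩ : k + l = n ∧ i + j = k := by simpa using h
    simp [Nat.choose_mul (Nat.le_add_right i j), add_assoc]

-- The Pfaff–Saalschütz theorem, cleared of denominators.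
theorem saalschutz (x y s : ℝ) (n : ℕ) :
    ∑ p ∈ antidiagonal n, n.choose p.1 *
        (poch x p.1 * poch y p.1 * poch (x + y + s + p.1) p.2 * poch s p.2) =
      poch (x + s) n * poch (y + s) n := by
  calc
    _ = ∑ p ∈ antidiagonal n, n.choose p.1 * ∑ q ∈ antidiagonal p.2, p.2.choose q.1 *
          (poch x (p.1 + q.1) * poch y p.1 * poch (y + s) q.2 * poch s (q.1 + q.2)) := by
      refine sum_congr rfl fun p _ => ?_
      rw [show x + y + s + p.1 = (x + p.1) + (y + s) by ring, poch_add_left, mul_sum, sum_mul]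
      congr 1
      refine sum_congr rfl fun q hq => ?_
      rw [poch_add x, mem_antidiagonal.mp hq]
      ring
    _ = ∑ p ∈ antidiagonal n, n.choose p.1 * ∑ q ∈ antidiagonal p.1, p.1.choose q.1 *
          (poch x (q.1 + q.2) * poch y q.1 * poch (y + s) p.2 * poch s (q.2 + p.2)) :=
      (sum_choose_mul_sum_choose_assoc (fun i j l =>
        poch x (i + j) * poch y i * poch (y + s) l * poch s (j + l)) n).symm
    _ = ∑ p ∈ antidiagonal n, n.choose p.1 * (poch x p.1 * poch s p.2) * poch (y + s) n := by
      refine sum_congr rfl fun p hp => ?_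
      rw [← mem_antidiagonal.mp hp, add_comm p.1, poch_add (y + s), add_assoc y,
        poch_add_left y (s + p.2), mul_sum, mul_sum, mul_sum]
      refine sum_congr rfl fun q hq => ?_
      rw [mem_antidiagonal.mp hq, add_comm q.2, poch_add s]
      ring
    _ = poch (x + s) n * poch (y + s) n := by rw [← sum_mul, ← poch_add_left]

theorem saalschutz_alternating {a s e f : ℝ} {n : ℕ} (h : a + s + 1 = e + f + n) :
    ∑ p ∈ antidiagonal n, n.choose p.1 * ((-1) ^ p.1 * poch a p.1 * poch s p.1 *
        (poch (e + p.1) p.2 * poch (f + p.1) p.2)) = poch (e - a) n * poch (f - a) n := by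
  have hsq (m : ℕ) : (-1 : ℝ) ^ m * (-1) ^ m = 1 := by rw [← mul_pow]; norm_num
  have he : a + s + (1 - f - n) = e := by linarith
  have hsaal := saalschutz a s (1 - f - n) n
  rw [he, show a + (1 - f - n) = 1 - (f - a) - n by ring, poch_reflect,
    show s + (1 - f - n) = e - a by linarith] at hsaal
  calc
    _ = (-1) ^ n * ∑ p ∈ antidiagonal n, n.choose p.1 * (poch a p.1 * poch s p.1 *
          poch (e + p.1) p.2 * poch (1 - f - n) p.2) := by
      rw [mul_sum]
      refine sum_congr rfl fun p hp => ?_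
      obtain rfl : p.1 + p.2 = n := mem_antidiagonal.mp hp
      rw [show 1 - f - (p.1 + p.2 : ℕ) = 1 - (f + p.1) - p.2 by push_cast; ring, poch_reflect]
      linear_combination (-(-1) ^ p.1 * (p.1 + p.2).choose p.1 * poch a p.1 * poch s p.1 *
        poch (e + p.1) p.2 * poch (f + p.1) p.2) * hsq p.2
    _ = poch (e - a) n * poch (f - a) n := by
      rw [hsaal]
      linear_combination (poch (e - a) n * poch (f - a) n) * hsq n

/-- The ratio `(a)_k (b)_k / (c)_k`, the building block of the hypergeometric terms below. -/
noncomputable def pochRatio (a b c : ℝ) (k : ℕ) : ℝ := poch a k * poch b k / poch c k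

@[simp]
lemma pochRatio_zero (a b c : ℝ) : pochRatio a b c 0 = 1 := by simp [pochRatio]

lemma pochRatio_succ (a b c : ℝ) (k : ℕ) :
    pochRatio a b c (k + 1) = pochRatio a b c k * ((a + k) * (b + k) / (c + k)) := by
  simp only [pochRatio, poch_succ, div_mul_div_comm, mul_mul_mul_comm]

lemma pochRatio_succ_left (a b c : ℝ) (k : ℕ) :
    pochRatio a b c (k + 1) = a * b / c * pochRatio (a + 1) (b + 1) (c + 1) k := by
  simp only [pochRatio, poch_succ_left]
  ring

lemma pochRatio_pos {a b c : ℝ} (ha : 0 < a) (hb : 0 < b) (hc : 0 < c) (k : ℕ) :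
    0 < pochRatio a b c k :=
  div_pos (mul_pos (poch_pos ha k) (poch_pos hb k)) (poch_pos hc k)

lemma pochRatio_eq_sum {b c d : ℝ} {k : ℕ} (hd : poch d k ≠ 0) :
    pochRatio b c d k = ∑ p ∈ antidiagonal k, k.choose p.1 *
      (pochRatio (d - b) (d - c) d p.1 * poch (b + c - d) p.2) := by
  have hsaal := saalschutz (d - b) (d - c) (b + c - d) k
  rw [show d - b + (b + c - d) = c by ring, show d - c + (b + c - d) = b by ring] at hsaal
  rw [pochRatio, mul_comm, ← hsaal, sum_div]
  refine sum_congr rfl fun p hp => ?_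
  rw [← mem_antidiagonal.mp hp, poch_add] at hd
  rw [show d - b + (d - c) + (b + c - d) = d by ring, ← mem_antidiagonal.mp hp, poch_add d,
    pochRatio]
  have hd₁ := left_ne_zero_of_mul hd
  have hd₂ := right_ne_zero_of_mul hd
  field_simp

theorem whipple_transformation {a b c d e f : ℝ} {n : ℕ} (hd : poch d n ≠ 0)
    (hbal : a + b + c + 1 = d + e + f + n) :
    ∑ p ∈ antidiagonal n, n.choose p.1 * ((-1) ^ p.1 * poch a p.1 *
        pochRatio b c d p.1 * (poch (e + p.1) p.2 * poch (f + p.1) p.2)) =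
      ∑ p ∈ antidiagonal n, n.choose p.1 * ((-1) ^ p.1 * poch a p.1 *
        pochRatio (d - b) (d - c) d p.1 *
        (poch (e - a) p.2 * poch (f - a) p.2)) := by
  let t (i j l : ℕ) : ℝ := (-1) ^ (i + j) * poch a (i + j) *
    pochRatio (d - b) (d - c) d i * poch (b + c - d) j *
    (poch (e + (i + j)) l * poch (f + (i + j)) l)
  calc
    _ = ∑ p ∈ antidiagonal n, n.choose p.1 *
          ∑ q ∈ antidiagonal p.1, p.1.choose q.1 * t q.1 q.2 p.2 := by
      refine sum_congr rfl fun p hp => ?_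
      rw [pochRatio_eq_sum (poch_ne_zero_of_le (antidiagonal.fst_le hp) hd), mul_sum, sum_mul]
      congr 1
      refine sum_congr rfl fun q hq => ?_
      rw [← mem_antidiagonal.mp hq, Nat.cast_add]
      ring
    _ = ∑ p ∈ antidiagonal n, n.choose p.1 *
          ∑ q ∈ antidiagonal p.2, p.2.choose q.1 * t p.1 q.1 q.2 :=
      sum_choose_mul_sum_choose_assoc t n
    _ = _ := by
      refine sum_congr rfl fun p hp => ?_
      have hn : (p.1 : ℝ) + p.2 = n := mod_cast mem_antidiagonal.mp hp
      have hbal' : a + p.1 + (b + c - d) + 1 = (e + p.1) + (f + p.1) + p.2 := by linarith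
      rw [← add_sub_add_right_eq_sub e a p.1, ← add_sub_add_right_eq_sub f a p.1,
        ← saalschutz_alternating hbal']
      congr 1
      rw [mul_sum]
      refine sum_congr rfl fun q _ => ?_
      simp only [t]
      rw [poch_add a, pow_add, add_assoc e, add_assoc f]
      ring

/-- The term `(a)_j (δ)_j (β - 1/2 + i)_j (β)_i (ε)_i / (c)_j` of `whippleSum`. -/
noncomputable def whippleTerm (a c β δ ε : ℝ) (j i : ℕ) : ℝ :=
  pochRatio a δ c j * poch (β - 1 / 2 + i) j * (poch β i * poch ε i)

/-- The sum into which Whipple's transformation turns `gasperC a b c ν n`, up to a positive factor.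
Its parameters are `β = b - a`, `δ = c - (ν + 1)` and `ε = ν + 1/2 - a`. -/
noncomputable def whippleSum (a c β δ ε : ℝ) (n : ℕ) : ℝ :=
  ∑ p ∈ antidiagonal n, n.choose p.1 * whippleTerm a c β δ ε p.1 p.2

lemma poch_mul_poch_mul_gasperC {a b c ν : ℝ} {n : ℕ} (hb : poch b n ≠ 0)
    (hν : poch (ν + 1 / 2) n ≠ 0) :
    poch b n * poch (ν + 1 / 2) n * gasperC a b c ν n =
      ∑ p ∈ antidiagonal n, n.choose p.1 * ((-1) ^ p.1 * poch a p.1 *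
        pochRatio (ν + 1) (n + 2 * ν) c p.1 *
        (poch (b + p.1) p.2 * poch (ν + 1 / 2 + p.1) p.2)) := by
  rw [gasperC, ← Nat.succ_eq_add_one, ← Nat.sum_antidiagonal_eq_sum_range_succ fun k _ =>
    (-1 : ℝ) ^ k * (n.choose k) * poch ((n : ℝ) + 2 * ν) k * poch (ν + 1) k * poch a k /
      (poch (ν + 1 / 2) k * poch b k * poch c k), mul_sum]
  refine sum_congr rfl fun p hp => ?_
  have hb' := poch_ne_zero_of_le (antidiagonal.fst_le hp) hb
  have hν' := poch_ne_zero_of_le (antidiagonal.fst_le hp) hν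
  rw [pochRatio]
  nth_rw 1 2 [← mem_antidiagonal.mp hp]
  rw [poch_add b, poch_add (ν + 1 / 2)]
  generalize ν + 1 / 2 = μ at hν' ⊢
  field_simp

theorem poch_mul_poch_mul_gasperC_eq_whippleSum {a b c ν : ℝ} {n : ℕ} (hb : poch b n ≠ 0)
    (hc : poch c n ≠ 0) (hν : poch (ν + 1 / 2) n ≠ 0) (hbal : 2 * ν = b + c - a - 3 / 2) :
    poch b n * poch (ν + 1 / 2) n * gasperC a b c ν n =
      whippleSum a c (b - a) (c - (ν + 1)) (ν + 1 / 2 - a) n := by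
  rw [poch_mul_poch_mul_gasperC hb hν, whipple_transformation hc (by linarith), whippleSum]
  refine sum_congr rfl fun p hp => ?_
  have hn : (p.1 : ℝ) + p.2 = n := mod_cast mem_antidiagonal.mp hp
  have hsq : (-1 : ℝ) ^ p.1 * (-1) ^ p.1 = 1 := by rw [← mul_pow]; norm_num
  rw [whippleTerm, pochRatio, pochRatio,
    show c - (n + 2 * ν) = 1 - (b - a - 1 / 2 + p.2) - p.1 by linarith, poch_reflect]
  linear_combination (n.choose p.1 * (poch a p.1 * poch (c - (ν + 1)) p.1 / poch c p.1 *
    poch (b - a - 1 / 2 + p.2) p.1 * (poch (b - a) p.2 * poch (ν + 1 / 2 - a) p.2))) * hsq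

lemma add_mul_add_div_add_le {a b c x : ℝ} (hc : 0 < c) (hac : a ≤ c) (hbc : b ≤ c)
    (hx : 0 ≤ x) : (a + x) * (b + x) / (c + x) ≤ a * b / c + x := by
  rw [div_add' _ _ _ hc.ne', div_le_div_iff₀ (by positivity) hc]
  linear_combination mul_nonneg hx (mul_nonneg (sub_nonneg.2 hac) (sub_nonneg.2 hbc))

section

variable {a b c : ℝ} (ha : 0 < a) (hb : 0 < b) (hac : a ≤ c) (hbc : b ≤ c)
include ha hb hac hbc

lemma pochRatio_add_one_succ_le (m : ℕ) :
    pochRatio (a + 1) (b + 1) (c + 1) (m + 1) ≤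
      pochRatio a b c (m + 1) + (m + 1) * pochRatio (a + 1) (b + 1) (c + 1) m := by
  have hc : 0 < c := ha.trans_le hac
  have hratio := add_mul_add_div_add_le hc hac hbc (by positivity : (0 : ℝ) ≤ 1 + m)
  have hpos : 0 < pochRatio (a + 1) (b + 1) (c + 1) m :=
    pochRatio_pos (by positivity) (by positivity) (by positivity) m
  rw [pochRatio_succ, pochRatio_succ_left a b c, add_assoc a, add_assoc b, add_assoc c]
  linear_combination pochRatio (a + 1) (b + 1) (c + 1) m * hratio

lemma pochRatio_add_one_le_sum (m : ℕ) :
    pochRatio (a + 1) (b + 1) (c + 1) m ≤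
      ∑ p ∈ antidiagonal m, m.choose p.1 * (pochRatio a b c p.1 * p.2.factorial) := by
  induction m with
  | zero => simp
  | succ m ih =>
    have hchoose (p : ℕ × ℕ) (hp : p ∈ antidiagonal m) :
        ((m + 1).choose p.1 : ℝ) * (p.2 + 1) = (m + 1) * m.choose p.1 := by
      have hsub : m + 1 - p.1 = p.2 + 1 := by grind [mem_antidiagonal.mp hp]
      have hmul := Nat.choose_mul_succ_eq m p.1
      rw [hsub, mul_comm] at hmul
      exact mod_cast hmul.symm
    calc
      _ ≤ pochRatio a b c (m + 1) + (m + 1) * pochRatio (a + 1) (b + 1) (c + 1) m :=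
        pochRatio_add_one_succ_le ha hb hac hbc m
      _ ≤ pochRatio a b c (m + 1) + (m + 1) * ∑ p ∈ antidiagonal m,
            m.choose p.1 * (pochRatio a b c p.1 * p.2.factorial) := by gcongr
      _ = _ := by
        rw [Nat.sum_antidiagonal_succ', mul_sum]
        simp only [Nat.choose_self, Nat.factorial_zero, Nat.cast_one, one_mul, mul_one]
        congr 1
        refine sum_congr rfl fun p hp => ?_
        rw [Nat.factorial_succ]
        push_cast
        linear_combination -(pochRatio a b c p.1 * p.2.factorial) * hchoose p hp

end

lemma factorial_mul_poch_le {x y z : ℝ} (hx : 0 ≤ x) (hxy : x ≤ y) (hz : 1 ≤ z) (i j : ℕ) :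
    i.factorial * poch x (i + j) ≤ poch (x + i) j * (poch y i * poch z i) := by
  have hshift : 0 ≤ poch (x + i) j := poch_nonneg (by positivity) j
  calc
    i.factorial * poch x (i + j) = poch (x + i) j * (poch x i * poch 1 i) := by
      rw [poch_add, poch_one_left]
      ring
    _ ≤ poch (x + i) j * (poch y i * poch z i) := by
      gcongr
      · exact poch_nonneg zero_le_one i
      · exact poch_nonneg (hx.trans hxy) i
      · exact poch_le_poch hx hxy i
      · exact poch_le_poch zero_le_one hz i

lemma whippleTerm_pos {a c β δ ε : ℝ} (ha : 0 < a) (hc : 0 < c) (hβ : 1 / 2 < β) (hδ : 0 < δ)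
    (hε : 0 < ε) (j i : ℕ) : 0 < whippleTerm a c β δ ε j i := by
  have hβi : 0 < β - 1 / 2 + i := add_pos_of_pos_of_nonneg (sub_pos.2 hβ) i.cast_nonneg
  exact mul_pos (mul_pos (pochRatio_pos ha hδ hc j) (poch_pos hβi j))
    (mul_pos (poch_pos (by linarith) i) (poch_pos hε i))

lemma poch_mul_pochRatio_le_whippleSum {a c β δ ε : ℝ} (ha : 0 < a) (hδ : 0 < δ) (hac : a ≤ c)
    (hδc : δ ≤ c) (hβ : 1 / 2 ≤ β) (hε : 1 ≤ ε) (m : ℕ) :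
    poch (β - 1 / 2) m * pochRatio (a + 1) (δ + 1) (c + 1) m ≤ whippleSum a c β δ ε m := by
  have hβ' : 0 ≤ β - 1 / 2 := sub_nonneg.2 hβ
  have hterm (p : ℕ × ℕ) (hp : p ∈ antidiagonal m) :
      poch (β - 1 / 2) m * (pochRatio a δ c p.1 * p.2.factorial) ≤
        whippleTerm a c β δ ε p.1 p.2 := by
    obtain rfl : p.1 + p.2 = m := mem_antidiagonal.mp hp
    have hfact := factorial_mul_poch_le hβ' (sub_le_self β one_half_pos.le) hε p.2 p.1
    rw [whippleTerm, add_comm p.1]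
    linear_combination
      mul_le_mul_of_nonneg_left hfact (pochRatio_pos ha hδ (ha.trans_le hac) p.1).le
  calc
    _ ≤ poch (β - 1 / 2) m * ∑ p ∈ antidiagonal m,
          m.choose p.1 * (pochRatio a δ c p.1 * p.2.factorial) :=
      mul_le_mul_of_nonneg_left (pochRatio_add_one_le_sum ha hδ hac hδc m) (poch_nonneg hβ' m)
    _ ≤ _ := by
      rw [mul_sum]
      refine sum_le_sum fun p hp => ?_
      linear_combination mul_le_mul_of_nonneg_left (hterm p hp) (Nat.cast_nonneg (m.choose p.1))

lemma whippleSum_succ (a c β δ ε : ℝ) (m : ℕ) :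
    whippleSum a c β δ ε (m + 1) =
      β * ε * ∑ p ∈ antidiagonal m, (m + 1).choose p.1 *
          whippleTerm a c (β + 1) δ (ε + 1) p.1 p.2 -
        a * δ / c * (1 / 2 - β) *
          (poch (β + 1 / 2) m * pochRatio (a + 1) (δ + 1) (c + 1) m) := by
  rw [whippleSum, Nat.sum_antidiagonal_succ', mul_sum, add_comm, sub_eq_add_neg]
  congr 1
  · refine sum_congr rfl fun p _ => ?_
    rw [whippleTerm, whippleTerm, poch_succ_left β, poch_succ_left ε, Nat.cast_succ,
      show β - 1 / 2 + (p.2 + 1) = β + 1 - 1 / 2 + p.2 by ring]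
    ring
  · rw [whippleTerm, pochRatio_succ_left, Nat.cast_zero, add_zero, poch_succ_left (β - 1 / 2),
      show β - 1 / 2 + 1 = β + 1 / 2 by ring, poch_zero, poch_zero, Nat.choose_self, Nat.cast_one]
    ring

section

variable {a c β δ ε : ℝ} (ha : 0 < a) (hδ : 0 < δ) (hac : a ≤ c) (hδc : δ ≤ c) (hβ : 0 < β)
  (hε : 0 < ε) (hbound : a * δ / c * (1 / 2 - β) ≤ β * ε)
include ha hδ hac hδc hβ hε hbound

lemma sum_choose_sub_le_whippleSum_succ (m : ℕ) :
    β * ε * ∑ p ∈ antidiagonal m, ((m + 1).choose p.1 - m.choose p.1) *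
        whippleTerm a c (β + 1) δ (ε + 1) p.1 p.2 ≤ whippleSum a c β δ ε (m + 1) := by
  have hβε : 0 ≤ β * ε := by positivity
  have hc : 0 < c := ha.trans_le hac
  have hpos : 0 < poch (β + 1 / 2) m * pochRatio (a + 1) (δ + 1) (c + 1) m :=
    mul_pos (poch_pos (by positivity) m)
      (pochRatio_pos (by positivity) (by positivity) (by positivity) m)
  have hsum := poch_mul_pochRatio_le_whippleSum ha hδ hac hδc
    (by linarith : 1 / 2 ≤ β + 1) (by linarith : 1 ≤ ε + 1) m
  rw [show β + 1 - 1 / 2 = β + 1 / 2 by ring, whippleSum] at hsum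
  simp only [whippleSum_succ, sub_mul, sum_sub_distrib]
  linear_combination mul_le_mul_of_nonneg_right hbound hpos.le +
    mul_le_mul_of_nonneg_left hsum hβε

lemma whippleSum_succ_nonneg (m : ℕ) : 0 ≤ whippleSum a c β δ ε (m + 1) := by
  refine le_trans (mul_nonneg (by positivity) (sum_nonneg fun p _ => mul_nonneg ?_ ?_))
    (sum_choose_sub_le_whippleSum_succ ha hδ hac hδc hβ hε hbound m)
  · exact sub_nonneg.2 (mod_cast Nat.choose_le_succ m p.1)
  · exact (whippleTerm_pos ha (ha.trans_le hac) (by linarith) hδ (by linarith) _ _).le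

lemma whippleSum_pos {n : ℕ} (hn : 2 ≤ n) : 0 < whippleSum a c β δ ε n := by
  obtain ⟨m, rfl⟩ := Nat.exists_eq_add_of_le' hn
  have hterm := whippleTerm_pos ha (ha.trans_le hac) (by linarith : 1 / 2 < β + 1) hδ
    (by linarith : 0 < ε + 1)
  refine lt_of_lt_of_le (mul_pos (mul_pos hβ hε) (sum_pos' (fun p _ => ?_) ⟨(m + 1, 0), ?_, ?_⟩))
    (sum_choose_sub_le_whippleSum_succ ha hδ hac hδc hβ hε hbound (m + 1))
  · exact mul_nonneg (sub_nonneg.2 (mod_cast Nat.choose_le_succ _ p.1)) (hterm _ _).le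
  · simp
  · refine mul_pos (sub_pos.2 ?_) (hterm _ _)
    rw [Nat.choose_self, Nat.choose_succ_self_right]
    exact mod_cast (by omega : 1 < m + 1 + 1)

end

lemma whipple_last_coeff_le {a b c ν : ℝ} (hbal : 2 * ν = b + c - a - 3 / 2) (hc : 0 < c)
    (hν : 0 ≤ ν + 1 / 2) (hab : a < b) (h : a + a / (2 * (b - a)) ≤ c) :
    a * (c - (ν + 1)) / c * (1 / 2 - (b - a)) ≤ (b - a) * (ν + 1 / 2 - a) := by
  have hβ : 0 < 2 * (b - a) := by linarith
  have hgap : a ≤ (c - a) * (2 * (b - a)) := (div_le_iff₀ hβ).1 (le_sub_iff_add_le'.2 h)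
  have hfactor : (b - a) * (ν + 1 / 2 - a) * c - a * (c - (ν + 1)) * (1 / 2 - (b - a)) =
      (ν + 1 / 2) * ((c - a) * (2 * (b - a)) - a) / 2 := by
    obtain rfl : b = 2 * ν - c + a + 3 / 2 := by linarith
    ring
  rw [div_mul_eq_mul_div, div_le_iff₀ hc]
  linarith [mul_nonneg hν (sub_nonneg.2 hgap)]

theorem stmt5 (a b c : ℝ) (ha : 0 < a) (hb : 0 < b) (hc : 0 < c)
    (h1 : b - a + 1 / 2 < c) (h2 : a - 1 / 2 ≤ b)
    (h3 : 3 * a + 1 / 2 - b < c) (h4 : a < b)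
    (h5 : a + a / (2 * (b - a)) ≤ c) :
    0 ≤ gasperC a b c ((b + c - a - 3 / 2) / 2) 1 ∧
      ∀ n : ℕ, 2 ≤ n → 0 < gasperC a b c ((b + c - a - 3 / 2) / 2) n := by
  set ν := (b + c - a - 3 / 2) / 2 with hν
  have hβ : 0 < b - a := sub_pos.2 h4
  have hδ : 0 < c - (ν + 1) := by linarith
  have hε : 0 < ν + 1 / 2 - a := by linarith
  have hac : a ≤ c := le_trans (le_add_of_nonneg_right (by positivity)) h5
  have hδc : c - (ν + 1) ≤ c := by linarith
  have hbound : a * (c - (ν + 1)) / c * (1 / 2 - (b - a)) ≤ (b - a) * (ν + 1 / 2 - a) :=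
    whipple_last_coeff_le (by linarith) hc (by linarith) h4 h5
  have hpos (n : ℕ) : 0 < poch b n * poch (ν + 1 / 2) n :=
    mul_pos (poch_pos hb n) (poch_pos (by linarith) n)
  have hwhipple (n : ℕ) := poch_mul_poch_mul_gasperC_eq_whippleSum (a := a) (poch_pos hb n).ne'
    (poch_pos hc n).ne' (poch_pos (by linarith : 0 < ν + 1 / 2) n).ne' (by linarith)
  constructor
  · refine nonneg_of_mul_nonneg_right ?_ (hpos 1)
    exact hwhipple 1 ▸ whippleSum_succ_nonneg ha hδ hac hδc hβ hε hbound 0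
  · intro n hn
    refine pos_of_mul_pos_right ?_ (hpos n).le
    exact hwhipple n ▸ whippleSum_pos ha hδ hac hδc hβ hε hbound hn
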